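/- Let k ≥ 1 be an integer with k ≤ |α| if α ∈ ℤ (no restriction if α ∉ ℤ), and let l ≥ 1 be an integer with l ≤ |β| if β ∈ ℤ (no restriction if β ∉ ℤ). Then, in the ℂ-vector space of all functions ℤ → ℂ, the kernel of the k-th power of (L_{α,β;ε} − Id) equals the span of the 2k functions φ₊^{(0)},…,φ₊^{(k−1)}, ψ₊^{(0)},…,ψ₊^{(k−1)}, and the kernel of the l-th power of (L_{α,β;ε} + Id) equals the span of the 2l functions φ₋^{(0)},…,φ₋^{(l−1)}, ψ₋^{(0)},…,ψ₋^{(l−1)}. In particular each of these two families is linearly independent, so these kernels have dimensions 2k and 2l respectively. -/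

import Mathlib

/-- Pochhammer symbol `(a)_n` for complex `a` and integer `n`. -/
noncomputable def poch (a : ℂ) (n : ℤ) : ℂ :=
  if 0 ≤ n then ∏ j ∈ Finset.range n.toNat, (a + (j : ℂ))
  else (∏ j ∈ Finset.range (-n).toNat, (a + (n : ℂ) + (j : ℂ)))⁻¹

/-- Gauss hypergeometric series `F(a,b;c;x)`. -/
noncomputable def hypF (a b c x : ℂ) : ℂ :=
  ∑' j : ℕ, (poch a (j : ℤ) * poch b (j : ℤ)) / ((j.factorial : ℂ) * poch c (j : ℤ)) * x ^ j

/-- The Jacobi difference operator `L_{α,β;ε}`. -/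
noncomputable def jacobiL (α β ε : ℂ) (f : ℤ → ℂ) (n : ℤ) : ℂ :=
  (2 * ((n : ℂ) + ε + 1) * ((n : ℂ) + ε + α + β + 1) /
      ((2 * (n : ℂ) + 2 * ε + α + β + 1) * (2 * (n : ℂ) + 2 * ε + α + β + 2))) * f (n + 1)
  + ((β ^ 2 - α ^ 2) /
      ((2 * (n : ℂ) + 2 * ε + α + β) * (2 * (n : ℂ) + 2 * ε + α + β + 2))) * f n
  + (2 * ((n : ℂ) + ε + α) * ((n : ℂ) + ε + β) /
      ((2 * (n : ℂ) + 2 * ε + α + β) * (2 * (n : ℂ) + 2 * ε + α + β + 1))) * f (n - 1)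

/-- The eigenvalue `λ_ε(n) = (n+ε)(n+ε+α+β+1)`. -/
noncomputable def lamE (α β ε : ℂ) (n : ℤ) : ℂ := ((n : ℂ) + ε) * ((n : ℂ) + ε + α + β + 1)

/-- The function `p^{α,β}_ε(n,z)` (case `α ∉ ℤ_{<0}`). -/
noncomputable def pStd (α β ε : ℂ) (n : ℤ) (z : ℂ) : ℂ :=
  (poch (ε + α + 1) n / poch (ε + 1) n) *
    hypF (-((n : ℂ) + ε)) ((n : ℂ) + ε + α + β + 1) (α + 1) ((1 - z) / 2)

/-- None of `ε, ε+α, ε+β, ε+α+β, 2ε+α+β` is an integer. -/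
def GoodParams (α β ε : ℂ) : Prop :=
  ∀ m : ℤ, ε ≠ (m : ℂ) ∧ ε + α ≠ (m : ℂ) ∧ ε + β ≠ (m : ℂ) ∧
    ε + α + β ≠ (m : ℂ) ∧ 2 * ε + α + β ≠ (m : ℂ)

/-- `φ₊^{(i)}(n)`. -/
noncomputable def phiPd (α β ε : ℂ) (i : ℕ) (n : ℤ) : ℂ :=
  (poch (ε + α + 1) n / poch (ε + 1) n) *
    (poch (-((n : ℂ) + ε)) (i : ℤ) * poch ((n : ℂ) + ε + α + β + 1) (i : ℤ)) /
      ((-2 : ℂ) ^ i * (i.factorial : ℂ) * poch (α + 1) (i : ℤ))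

/-- `ψ₊^{(i)}(n)`. -/
noncomputable def psiPd (α β ε : ℂ) (i : ℕ) (n : ℤ) : ℂ :=
  (poch (ε + β + 1) n / poch (ε + α + β + 1) n) *
    (poch (-((n : ℂ) + ε + α + β)) (i : ℤ) * poch ((n : ℂ) + ε + 1) (i : ℤ)) /
      ((-2 : ℂ) ^ i * (i.factorial : ℂ) * poch (-α + 1) (i : ℤ))

/-- `φ₋^{(i)}(n)`. -/
noncomputable def phiMd (α β ε : ℂ) (i : ℕ) (n : ℤ) : ℂ :=
  (-1 : ℂ) ^ n * (poch (ε + β + 1) n / poch (ε + 1) n) *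
    (poch (-((n : ℂ) + ε)) (i : ℤ) * poch ((n : ℂ) + ε + α + β + 1) (i : ℤ)) /
      ((2 : ℂ) ^ i * (i.factorial : ℂ) * poch (β + 1) (i : ℤ))

/-- `ψ₋^{(i)}(n)`. -/
noncomputable def psiMd (α β ε : ℂ) (i : ℕ) (n : ℤ) : ℂ :=
  (-1 : ℂ) ^ n * (poch (ε + α + 1) n / poch (ε + α + β + 1) n) *
    (poch (-((n : ℂ) + ε + α + β)) (i : ℤ) * poch ((n : ℂ) + ε + 1) (i : ℤ)) /
      ((2 : ℂ) ^ i * (i.factorial : ℂ) * poch (-β + 1) (i : ℤ))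

/-- The Jacobi difference operator as a linear endomorphism of `ℤ → ℂ`. -/
noncomputable def jacobiLin (α β ε : ℂ) : Module.End ℂ (ℤ → ℂ) where
  toFun f := jacobiL α β ε f
  map_add' f g := by
    funext n
    simp only [jacobiL, Pi.add_apply]
    ring
  map_smul' c f := by
    funext n
    simp only [jacobiL, Pi.smul_apply, smul_eq_mul, RingHom.id_apply]
    ring


section helpers

theorem abs_lin {V : Type*} [AddCommGroup V] [Module ℂ V] (T : Module.End ℂ V) (v w : ℕ → V)
    (hv0 : T (v 0) = 0) (hw0 : T (w 0) = 0)
    (hli : ∀ a b : ℂ, a • v 0 + b • w 0 = 0 → a = 0 ∧ b = 0) (k : ℕ) :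
    (∀ i, i + 1 < k → T (v (i+1)) = v i) → (∀ i, i + 1 < k → T (w (i+1)) = w i) →
    ∀ a b : ℕ → ℂ, ∑ i ∈ Finset.range k, (a i • v i + b i • w i) = 0 →
      ∀ i < k, a i = 0 ∧ b i = 0 := by
  induction k with
  | zero => intro _ _ a b _ i hi; omega
  | succ k ih =>
    intro hv hw a b h
    rw [Finset.sum_range_succ'] at h
    have h1 : ∑ i ∈ Finset.range k, (a (i+1) • v i + b (i+1) • w i) = 0 := by
      have := congrArg T h
      simp only [map_add, map_sum, map_smul, hv0, hw0, map_zero, smul_zero, add_zero] at this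
      rw [← this]
      refine Finset.sum_congr rfl fun i hi => ?_
      have := Finset.mem_range.1 hi
      rw [hv i (by omega), hw i (by omega)]
    have h2 := ih (fun i hi => hv i (by omega)) (fun i hi => hw i (by omega)) _ _ h1
    have h3 : ∑ i ∈ Finset.range k, (a (i+1) • v (i+1) + b (i+1) • w (i+1)) = 0 := by
      refine Finset.sum_eq_zero fun i hi => ?_
      obtain ⟨p, q⟩ := h2 i (Finset.mem_range.1 hi)
      rw [p, q]; simp
    rw [h3, zero_add] at h
    intro i hi
    cases i with
    | zero => exact hli _ _ h
    | succ i => exact h2 i (by omega)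

theorem jac_abs_pow {V : Type*} [AddCommGroup V] [Module ℂ V] (T : Module.End ℂ V) (v : ℕ → V)
    (k : ℕ) (hv : ∀ i, i + 1 < k → T (v (i+1)) = v i) (j : ℕ) :
    ∀ i, i + j < k → (T ^ j) (v (i + j)) = v i := by
  induction j with
  | zero => intro i _; simp
  | succ j ih =>
    intro i hi
    rw [pow_succ, Module.End.mul_apply, ← add_assoc, hv _ (by omega)]
    exact ih i (by omega)

theorem abs_ker {V : Type*} [AddCommGroup V] [Module ℂ V] (T : Module.End ℂ V) (v w : ℕ → V)
    (hv0 : T (v 0) = 0) (hw0 : T (w 0) = 0)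
    (hsp : ∀ f, T f = 0 → ∃ a b : ℂ, f = a • v 0 + b • w 0) (k : ℕ) :
    (∀ i, i + 1 < k → T (v (i+1)) = v i) → (∀ i, i + 1 < k → T (w (i+1)) = w i) →
    LinearMap.ker (T ^ k) = Submodule.span ℂ {g : V | ∃ i < k, g = v i ∨ g = w i} := by
  induction k with
  | zero =>
    intro _ _
    ext x
    simp
  | succ k ih =>
    intro hv hw
    have IH := ih (fun i hi => hv i (by omega)) (fun i hi => hw i (by omega))
    have pv := jac_abs_pow T v _ hv k 0 (by omega)
    have pw := jac_abs_pow T w _ hw k 0 (by omega)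
    rw [zero_add] at pv pw
    have hsub : LinearMap.ker (T ^ k) ≤ LinearMap.ker (T ^ (k+1)) := by
      intro x hx
      rw [LinearMap.mem_ker] at hx ⊢
      rw [pow_succ', Module.End.mul_apply, hx, map_zero]
    apply le_antisymm
    · intro f hf
      rw [LinearMap.mem_ker, pow_succ', Module.End.mul_apply] at hf
      obtain ⟨a, b, hab⟩ := hsp _ hf
      have h1 : f - (a • v k + b • w k) ∈ LinearMap.ker (T ^ k) := by
        rw [LinearMap.mem_ker, map_sub, map_add, map_smul, map_smul, pv, pw, hab, sub_self]
      rw [IH] at h1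
      have h2 : f - (a • v k + b • w k) ∈
          Submodule.span ℂ {g : V | ∃ i < k+1, g = v i ∨ g = w i} := by
        refine Submodule.span_mono ?_ h1
        rintro g ⟨i, hi, h⟩
        exact ⟨i, by omega, h⟩
      have h3 : a • v k + b • w k ∈
          Submodule.span ℂ {g : V | ∃ i < k+1, g = v i ∨ g = w i} :=
        Submodule.add_mem _
          (Submodule.smul_mem _ _ (Submodule.subset_span ⟨k, by omega, Or.inl rfl⟩))
          (Submodule.smul_mem _ _ (Submodule.subset_span ⟨k, by omega, Or.inr rfl⟩))
      have := Submodule.add_mem _ h2 h3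
      rwa [sub_add_cancel] at this
    · rw [Submodule.span_le]
      rintro g ⟨i, hi, h⟩
      by_cases hik : i < k
      · apply hsub
        rw [IH]
        exact Submodule.subset_span ⟨i, hik, h⟩
      · obtain rfl : i = k := by omega
        rw [SetLike.mem_coe, LinearMap.mem_ker, pow_succ', Module.End.mul_apply]
        rcases h with rfl | rfl
        · rw [pv, hv0]
        · rw [pw, hw0]

theorem abs_all {V : Type*} [AddCommGroup V] [Module ℂ V] (T : Module.End ℂ V) (v w : ℕ → V)
    (hv0 : T (v 0) = 0) (hw0 : T (w 0) = 0)
    (hli : ∀ a b : ℂ, a • v 0 + b • w 0 = 0 → a = 0 ∧ b = 0)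
    (hsp : ∀ f, T f = 0 → ∃ a b : ℂ, f = a • v 0 + b • w 0) (k : ℕ)
    (hv : ∀ i, i + 1 < k → T (v (i+1)) = v i) (hw : ∀ i, i + 1 < k → T (w (i+1)) = w i) :
    LinearMap.ker (T ^ k) = Submodule.span ℂ {g : V | ∃ i < k, g = v i ∨ g = w i} ∧
    LinearIndependent ℂ (fun x : Fin k ⊕ Fin k =>
      Sum.elim (fun i : Fin k => v i) (fun i : Fin k => w i) x) ∧
    Module.finrank ℂ ↥(LinearMap.ker (T ^ k)) = 2 * k := by
  have hker := abs_ker T v w hv0 hw0 hsp k hv hw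
  have hind : LinearIndependent ℂ (fun x : Fin k ⊕ Fin k =>
      Sum.elim (fun i : Fin k => v i) (fun i : Fin k => w i) x) := by
    rw [Fintype.linearIndependent_iff]
    intro c hc
    rw [Fintype.sum_sum_type] at hc
    simp only [Sum.elim_inl, Sum.elim_inr] at hc
    rw [← Finset.sum_add_distrib] at hc
    have key := abs_lin T v w hv0 hw0 hli k hv hw
      (fun i => if h : i < k then c (Sum.inl ⟨i, h⟩) else 0)
      (fun i => if h : i < k then c (Sum.inr ⟨i, h⟩) else 0)
      (by
        rw [Finset.sum_range]
        simpa using hc)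
    rintro (i | i)
    · simpa using (key i i.2).1
    · simpa using (key i i.2).2
  refine ⟨hker, hind, ?_⟩
  have hset : {g : V | ∃ i < k, g = v i ∨ g = w i} = Set.range (fun x : Fin k ⊕ Fin k =>
      Sum.elim (fun i : Fin k => v i) (fun i : Fin k => w i) x) := by
    ext g
    constructor
    · rintro ⟨i, hi, rfl | rfl⟩
      · exact ⟨Sum.inl ⟨i, hi⟩, rfl⟩
      · exact ⟨Sum.inr ⟨i, hi⟩, rfl⟩
    · rintro ⟨i | i, rfl⟩
      · exact ⟨i, i.2, Or.inl rfl⟩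
      · exact ⟨i, i.2, Or.inr rfl⟩
  rw [hker, hset, finrank_span_eq_card hind]
  simp; ring

theorem poch_nat (a : ℂ) (i : ℕ) : poch a (i : ℤ) = ∏ j ∈ Finset.range i, (a + (j : ℂ)) := by
  simp [poch]

theorem poch_nat_succ (a : ℂ) (i : ℕ) :
    poch a ((i + 1 : ℕ) : ℤ) = poch a (i : ℤ) * (a + i) := by
  rw [poch_nat, poch_nat, Finset.prod_range_succ]

theorem poch_nat_succ_left (a : ℂ) (i : ℕ) :
    poch a ((i + 1 : ℕ) : ℤ) = a * poch (a + 1) (i : ℤ) := by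
  rw [poch_nat, poch_nat, Finset.prod_range_succ', mul_comm]
  congr 1
  · simp
  · refine Finset.prod_congr rfl fun j _ => ?_
    push_cast; ring

theorem poch_ne {a : ℂ} (ha : ∀ m : ℤ, a + m ≠ 0) (n : ℤ) : poch a n ≠ 0 := by
  unfold poch
  split_ifs
  · rw [Finset.prod_ne_zero_iff]
    intro j _
    exact_mod_cast ha j
  · apply inv_ne_zero
    rw [Finset.prod_ne_zero_iff]
    intro j _
    have := ha (n + j)
    push_cast at this
    rwa [add_assoc]

theorem poch_int_succ {a : ℂ} (ha : ∀ m : ℤ, a + m ≠ 0) (n : ℤ) :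
    poch a (n + 1) = poch a n * (a + n) := by
  rcases n with i | i
  · exact_mod_cast poch_nat_succ a i
  · rw [Int.negSucc_eq]
    have h1 : poch a (-((i:ℤ) + 1)) = (∏ j ∈ Finset.range (i+1), (a + ((-((i:ℤ) + 1) : ℤ) : ℂ) + (j : ℂ)))⁻¹ := by
      unfold poch
      rw [if_neg (by omega)]
      congr 2
    have h2 : poch a (-((i:ℤ) + 1) + 1) = (∏ j ∈ Finset.range i, (a + ((-(i:ℤ) : ℤ) : ℂ) + (j : ℂ)))⁻¹ := by
      rw [show -((i:ℤ) + 1) + 1 = -(i:ℤ) by ring]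
      cases i with
      | zero => simp [poch]
      | succ i =>
        unfold poch
        rw [if_neg (by omega)]
        congr 2
    rw [h1, h2, Finset.prod_range_succ', mul_inv, mul_assoc]
    have h3 := ha (-((i:ℤ) + 1))
    rw [Nat.cast_zero, add_zero, inv_mul_cancel₀ h3, mul_one]
    congr 1
    refine Finset.prod_congr rfl fun j _ => ?_
    push_cast; ring

theorem good_sub {α β ε : ℂ} (h : GoodParams α β ε) (m : ℤ) :
    ε + m ≠ 0 ∧ ε + α + m ≠ 0 ∧ ε + β + m ≠ 0 ∧ ε + α + β + m ≠ 0 ∧ 2 * ε + α + β + m ≠ 0 := by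
  obtain ⟨h1, h2, h3, h4, h5⟩ := h (-m)
  push_cast at h1 h2 h3 h4 h5
  exact ⟨fun e => h1 (by linear_combination e), fun e => h2 (by linear_combination e),
    fun e => h3 (by linear_combination e), fun e => h4 (by linear_combination e),
    fun e => h5 (by linear_combination e)⟩

theorem good_psi {α β ε : ℂ} (h : GoodParams α β ε) : GoodParams (-α) (-β) (ε + α + β) := by
  intro m
  obtain ⟨h1, h2, h3, h4, h5⟩ := h m
  exact ⟨h4, fun e => h3 (by linear_combination e), fun e => h2 (by linear_combination e),
    fun e => h1 (by linear_combination e), fun e => h5 (by linear_combination e)⟩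

theorem good_swap {α β ε : ℂ} (h : GoodParams α β ε) : GoodParams β α ε := by
  intro m
  obtain ⟨h1, h2, h3, h4, h5⟩ := h m
  exact ⟨h1, h3, h2, fun e => h4 (by linear_combination e), fun e => h5 (by linear_combination e)⟩

theorem psi_eq (α β ε : ℂ) (i : ℕ) : psiPd α β ε i = phiPd (-α) (-β) (ε + α + β) i := by
  funext n
  unfold psiPd phiPd
  rw [show ε + α + β + -α + 1 = ε + β + 1 by ring,
    show (n:ℂ) + (ε + α + β) + -α + -β + 1 = n + ε + 1 by ring,
    show (n:ℂ) + (ε + α + β) = n + ε + α + β by ring]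

theorem lin_psi (α β ε : ℂ) : jacobiLin (-α) (-β) (ε + α + β) = jacobiLin α β ε := by
  refine LinearMap.ext fun f => ?_
  funext n
  change jacobiL _ _ _ f n = jacobiL _ _ _ f n
  unfold jacobiL
  rw [show 2 * (n:ℂ) + 2 * (ε + α + β) + -α + -β = 2 * n + 2 * ε + α + β by ring,
    show (n:ℂ) + (ε + α + β) + -α + -β = n + ε by ring,
    show (n:ℂ) + (ε + α + β) + -α = n + ε + β by ring,
    show (n:ℂ) + (ε + α + β) + -β = n + ε + α by ring,
    show (n:ℂ) + (ε + α + β) = n + ε + α + β by ring]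
  ring

/-- weight -/
noncomputable def gW (α ε : ℂ) (n : ℤ) : ℂ := poch (ε + α + 1) n / poch (ε + 1) n

theorem gW_succ {α β ε : ℂ} (h : GoodParams α β ε) (n : ℤ) :
    gW α ε (n + 1) = gW α ε n * ((n + ε + α + 1) / (n + ε + 1)) := by
  have h1 : ∀ m : ℤ, ε + α + 1 + m ≠ 0 := fun m e => by
    refine (good_sub h (m + 1)).2.1 ?_
    push_cast; linear_combination e
  have h2 : ∀ m : ℤ, ε + 1 + m ≠ 0 := fun m e => by
    refine (good_sub h (m + 1)).1 ?_
    push_cast; linear_combination e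
  unfold gW
  rw [poch_int_succ h1, poch_int_succ h2, mul_div_mul_comm]
  congr 2 <;> ring

theorem gW_pred {α β ε : ℂ} (h : GoodParams α β ε) (n : ℤ) :
    gW α ε (n - 1) = gW α ε n * ((n + ε) / (n + ε + α)) := by
  have := gW_succ h (n - 1)
  rw [sub_add_cancel] at this
  rw [this]
  have h1 := (good_sub h n).1
  have h2 := (good_sub h n).2.1
  have h1' : (n:ℂ) + ε ≠ 0 := fun e => h1 (by linear_combination e)
  have h2' : (n:ℂ) + ε + α ≠ 0 := fun e => h2 (by linear_combination e)
  push_cast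
  rw [show (n:ℂ) - 1 + ε + α + 1 = n + ε + α by ring, show (n:ℂ) - 1 + ε + 1 = n + ε by ring]
  field_simp

theorem phi0 (α β ε : ℂ) (n : ℤ) : phiPd α β ε 0 n = gW α ε n := by
  simp [phiPd, gW, poch]

theorem L_phi0 {α β ε : ℂ} (h : GoodParams α β ε) :
    (jacobiLin α β ε - 1 : Module.End ℂ (ℤ → ℂ)) (phiPd α β ε 0) = 0 := by
  funext n
  change jacobiL α β ε (phiPd α β ε 0) n - phiPd α β ε 0 n = 0
  unfold jacobiL
  rw [phi0, phi0, phi0, gW_succ h, gW_pred h]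
  have h1 : (n:ℂ) + ε + 1 ≠ 0 := fun e => (good_sub h (n+1)).1 (by push_cast; linear_combination e)
  have h2 : (n:ℂ) + ε + α ≠ 0 := fun e => (good_sub h n).2.1 (by linear_combination e)
  have h3 : 2 * (n:ℂ) + 2 * ε + α + β ≠ 0 := fun e =>
    (good_sub h (2*n)).2.2.2.2 (by push_cast; linear_combination e)
  have h4 : 2 * (n:ℂ) + 2 * ε + α + β + 1 ≠ 0 := fun e =>
    (good_sub h (2*n+1)).2.2.2.2 (by push_cast; linear_combination e)
  have h5 : 2 * (n:ℂ) + 2 * ε + α + β + 2 ≠ 0 := fun e =>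
    (good_sub h (2*n+2)).2.2.2.2 (by push_cast; linear_combination e)
  generalize gW α ε n = G
  generalize (n : ℂ) = N at *
  generalize hd2 : 2 * N + 2 * ε + α + β + 2 = d2 at *
  generalize hd1 : 2 * N + 2 * ε + α + β + 1 = d1 at *
  generalize hd0 : 2 * N + 2 * ε + α + β = d0 at *
  generalize hq : N + ε + α = q at *
  generalize hpp : N + ε + 1 = p at *
  field_simp
  subst hd2 hd1 hd0 hq hpp
  ring

theorem L_phi {α β ε : ℂ} (h : GoodParams α β ε) (i : ℕ)
    (hp : poch (α + 1) ((i + 1 : ℕ) : ℤ) ≠ 0) :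
    (jacobiLin α β ε - 1 : Module.End ℂ (ℤ → ℂ)) (phiPd α β ε (i + 1)) = phiPd α β ε i := by
  funext n
  change jacobiL α β ε (phiPd α β ε (i+1)) n - phiPd α β ε (i+1) n = phiPd α β ε i n
  have e1 : ∀ m, phiPd α β ε (i+1) m = gW α ε m *
    (poch (-((m : ℂ) + ε)) ((i+1:ℕ) : ℤ) * poch ((m : ℂ) + ε + α + β + 1) ((i+1:ℕ) : ℤ)) /
      ((-2 : ℂ) ^ (i+1) * ((i+1).factorial : ℂ) * poch (α + 1) ((i+1:ℕ) : ℤ)) := fun m => rfl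
  have e2 : phiPd α β ε i n = gW α ε n *
    (poch (-((n : ℂ) + ε)) (i : ℤ) * poch ((n : ℂ) + ε + α + β + 1) (i : ℤ)) /
      ((-2 : ℂ) ^ i * (i.factorial : ℂ) * poch (α + 1) (i : ℤ)) := rfl
  unfold jacobiL
  rw [e1, e1, e1, e2, gW_succ h, gW_pred h]
  rw [poch_nat_succ] at hp
  have hp1 := left_ne_zero_of_mul hp
  have hp2 := right_ne_zero_of_mul hp
  have h1 : (n:ℂ) + ε + 1 ≠ 0 := fun e => (good_sub h (n+1)).1 (by push_cast; linear_combination e)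
  have h2 : (n:ℂ) + ε + α ≠ 0 := fun e => (good_sub h n).2.1 (by linear_combination e)
  have h3 : 2 * (n:ℂ) + 2 * ε + α + β ≠ 0 := fun e =>
    (good_sub h (2*n)).2.2.2.2 (by push_cast; linear_combination e)
  have h4 : 2 * (n:ℂ) + 2 * ε + α + β + 1 ≠ 0 := fun e =>
    (good_sub h (2*n+1)).2.2.2.2 (by push_cast; linear_combination e)
  have h5 : 2 * (n:ℂ) + 2 * ε + α + β + 2 ≠ 0 := fun e =>
    (good_sub h (2*n+2)).2.2.2.2 (by push_cast; linear_combination e)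
  have h6 : (n:ℂ) + ε - i ≠ 0 := fun e =>
    (good_sub h (n - i)).1 (by push_cast; linear_combination e)
  have h7 : (n:ℂ) + ε + α + β + 1 + i ≠ 0 := fun e =>
    (good_sub h (n + 1 + i)).2.2.2.1 (by push_cast; linear_combination e)
  have hf : (i.factorial : ℂ) ≠ 0 := by exact_mod_cast i.factorial_ne_zero
  have hi1 : (i : ℂ) + 1 ≠ 0 := by exact_mod_cast i.succ_ne_zero
  push_cast
  generalize hG : gW α ε n = G
  have q1 := poch_nat_succ (-((n:ℂ) + ε)) i
  have q2 := poch_nat_succ_left (-((n:ℂ) + ε)) i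
  have q3 := poch_nat_succ (-((n:ℂ) + ε) + 1) i
  have q4 := poch_nat_succ_left (-((n:ℂ) + ε) - 1) i
  have r1 := poch_nat_succ ((n:ℂ) + ε + α + β + 1) i
  have r2 := poch_nat_succ_left ((n:ℂ) + ε + α + β + 1) i
  have r3 := poch_nat_succ ((n:ℂ) + ε + α + β + 1 + 1) i
  have r4 := poch_nat_succ_left ((n:ℂ) + ε + α + β) i
  rw [sub_add_cancel] at q4
  rw [show -((n:ℂ) + 1 + ε) = -((n:ℂ) + ε) - 1 by ring,
    show -((n:ℂ) - 1 + ε) = -((n:ℂ) + ε) + 1 by ring,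
    show (n:ℂ) + 1 + ε + α + β + 1 = (n:ℂ) + ε + α + β + 1 + 1 by ring,
    show (n:ℂ) - 1 + ε + α + β + 1 = (n:ℂ) + ε + α + β by ring]
  have ha := poch_nat_succ (α + 1) i
  push_cast at q1 q2 q3 q4 r1 r2 r3 r4 ha
  rw [q2, q3, q4, r2, r3, r4, ha, Nat.factorial_succ]
  push_cast
  rw [q2] at q1
  rw [r2] at r1
  generalize poch (-((n:ℂ) + ε) + 1) (i:ℤ) = u at *
  generalize poch ((n:ℂ) + ε + α + β + 1 + 1) (i:ℤ) = w at *
  have q5 : poch (-((n:ℂ) + ε)) (i:ℤ) = (n + ε) * u / (n + ε - i) := by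
    rw [eq_div_iff h6]; linear_combination q1
  have r5 : poch ((n:ℂ) + ε + α + β + 1) (i:ℤ) = (n + ε + α + β + 1) * w / (n + ε + α + β + 1 + i) := by
    rw [eq_div_iff h7]; linear_combination -r1
  rw [q5, r5]
  generalize poch (α + 1) (i:ℤ) = A at *
  generalize (i.factorial : ℂ) = F at *
  clear q1 q2 q3 q4 r1 r2 r3 r4 q5 r5 e1 e2 hp ha hG
  have h20 : ((-2 : ℂ)) ^ i ≠ 0 := pow_ne_zero _ (by norm_num)
  rw [pow_succ]
  generalize (-2 : ℂ) ^ i = t at *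
  generalize (i : ℂ) = I at *
  generalize (n : ℂ) = N at *
  generalize hd2 : 2 * N + 2 * ε + α + β + 2 = d2 at *
  generalize hd1 : 2 * N + 2 * ε + α + β + 1 = d1 at *
  generalize hd0 : 2 * N + 2 * ε + α + β = d0 at *
  generalize hz : N + ε + α + β + 1 + I = z at *
  generalize hy : N + ε - I = y at *
  generalize hc : α + 1 + I = c at *
  generalize hj : I + 1 = j at *
  generalize hq : N + ε + α = q at *
  generalize hpp : N + ε + 1 = p at *
  field_simp
  subst hd2 hd1 hd0 hz hy hc hj hq hpp
  ring

theorem L_zero {α β ε : ℂ} (h : GoodParams α β ε) (f : ℤ → ℂ)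
    (hf : (jacobiLin α β ε - 1 : Module.End ℂ (ℤ → ℂ)) f = 0) (h0 : f 0 = 0) (h1 : f 1 = 0) :
    f = 0 := by
  have hrec : ∀ n, jacobiL α β ε f n - f n = 0 := fun n => congrFun hf n
  have hup : ∀ n, f (n - 1) = 0 → f n = 0 → f (n + 1) = 0 := by
    intro n a b
    have := hrec n
    unfold jacobiL at this
    rw [a, b] at this
    simp only [mul_zero, add_zero, sub_zero] at this
    refine (mul_eq_zero.1 this).resolve_left (div_ne_zero ?_ ?_)
    · refine mul_ne_zero (mul_ne_zero two_ne_zero ?_) ?_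
      · exact fun e => (good_sub h (n+1)).1 (by push_cast; linear_combination e)
      · exact fun e => (good_sub h (n+1)).2.2.2.1 (by push_cast; linear_combination e)
    · refine mul_ne_zero ?_ ?_
      · exact fun e => (good_sub h (2*n+1)).2.2.2.2 (by push_cast; linear_combination e)
      · exact fun e => (good_sub h (2*n+2)).2.2.2.2 (by push_cast; linear_combination e)
  have hdn : ∀ n, f (n + 1) = 0 → f n = 0 → f (n - 1) = 0 := by
    intro n a b
    have := hrec n
    unfold jacobiL at this
    rw [a, b] at this
    simp only [mul_zero, zero_add, sub_zero] at this
    refine (mul_eq_zero.1 this).resolve_left (div_ne_zero ?_ ?_)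
    · refine mul_ne_zero (mul_ne_zero two_ne_zero ?_) ?_
      · exact fun e => (good_sub h n).2.1 (by linear_combination e)
      · exact fun e => (good_sub h n).2.2.1 (by linear_combination e)
    · refine mul_ne_zero ?_ ?_
      · exact fun e => (good_sub h (2*n)).2.2.2.2 (by push_cast; linear_combination e)
      · exact fun e => (good_sub h (2*n+1)).2.2.2.2 (by push_cast; linear_combination e)
  have key : ∀ n : ℤ, f n = 0 ∧ f (n + 1) = 0 := by
    intro n
    induction n using Int.induction_on with
    | zero => exact ⟨h0, h1⟩
    | succ i ih =>
      refine ⟨ih.2, hup _ ?_ ih.2⟩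
      rw [add_sub_cancel_right]; exact ih.1
    | pred i ih =>
      refine ⟨hdn _ ih.2 ih.1, ?_⟩
      rw [sub_add_cancel]; exact ih.1
  funext n
  exact (key n).1

theorem poch_a_ne {α : ℂ} {k : ℕ} (hkα : ∀ m : ℤ, α = (m : ℂ) → (k : ℤ) ≤ |m|) (i : ℕ)
    (hi : i < k) : poch (α + 1) (i : ℤ) ≠ 0 := by
  rw [poch_nat, Finset.prod_ne_zero_iff]
  intro j hj e
  have hj := Finset.mem_range.1 hj
  have := hkα (-(j + 1)) (by push_cast; linear_combination e)
  rw [abs_neg, abs_of_nonneg (by omega)] at this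
  omega

theorem gW_zero (α ε : ℂ) : gW α ε 0 = 1 := by simp [gW, poch]
theorem gW_one (α ε : ℂ) : gW α ε 1 = (ε + α + 1) / (ε + 1) := by simp [gW, poch]

theorem plus_data {α β ε : ℂ} (h : GoodParams α β ε) (k : ℕ) (hk : 1 ≤ k)
    (hkα : ∀ m : ℤ, α = (m : ℂ) → (k : ℤ) ≤ |m|) :
    let T : Module.End ℂ (ℤ → ℂ) := jacobiLin α β ε - 1
    T (phiPd α β ε 0) = 0 ∧ T (psiPd α β ε 0) = 0 ∧
    (∀ a b : ℂ, a • phiPd α β ε 0 + b • psiPd α β ε 0 = 0 → a = 0 ∧ b = 0) ∧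
    (∀ f, T f = 0 → ∃ a b : ℂ, f = a • phiPd α β ε 0 + b • psiPd α β ε 0) ∧
    (∀ i, i + 1 < k → T (phiPd α β ε (i+1)) = phiPd α β ε i) ∧
    (∀ i, i + 1 < k → T (psiPd α β ε (i+1)) = psiPd α β ε i) := by
  intro T
  have hneg : ∀ m : ℤ, -α = (m : ℂ) → (k : ℤ) ≤ |m| := fun m e => by
    have := hkα (-m) (by push_cast; linear_combination -e)
    rwa [abs_neg] at this
  have hT0 := L_phi0 h
  have hT0' : T (psiPd α β ε 0) = 0 := by
    have := L_phi0 (good_psi h)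
    rwa [lin_psi, ← psi_eq] at this
  have a0 : phiPd α β ε 0 0 = 1 := by rw [phi0, gW_zero]
  have b0 : psiPd α β ε 0 0 = 1 := by rw [psi_eq, phi0, gW_zero]
  have a1 : phiPd α β ε 0 1 = (ε + α + 1) / (ε + 1) := by rw [phi0, gW_one]
  have b1 : psiPd α β ε 0 1 = (ε + β + 1) / (ε + α + β + 1) := by
    rw [psi_eq, phi0, gW_one]; congr 1; ring
  have hα : α ≠ 0 := fun e => by
    have := hkα 0 (by simpa using e)
    simp at this; omega
  have n1 : ε + 1 ≠ 0 := by simpa using (good_sub h 1).1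
  have n2 : ε + α + β + 1 ≠ 0 := by simpa using (good_sub h 1).2.2.2.1
  have n3 : 2 * ε + α + β + 2 ≠ 0 := by simpa using (good_sub h 2).2.2.2.2
  have hd : phiPd α β ε 0 1 - psiPd α β ε 0 1 ≠ 0 := by
    rw [a1, b1]
    have : (ε + α + 1) / (ε + 1) - (ε + β + 1) / (ε + α + β + 1)
      = α * (2 * ε + α + β + 2) / ((ε + 1) * (ε + α + β + 1)) := by
      field_simp; ring
    rw [this]
    exact div_ne_zero (mul_ne_zero hα n3) (mul_ne_zero n1 n2)
  refine ⟨hT0, hT0', ?_, ?_, ?_, ?_⟩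
  · intro a b hab
    have u0 := congrFun hab 0
    have u1 := congrFun hab 1
    simp only [Pi.add_apply, Pi.smul_apply, smul_eq_mul, Pi.zero_apply, a0, b0] at u0 u1
    have ha : a = 0 := by
      have : a * (phiPd α β ε 0 1 - psiPd α β ε 0 1) = 0 := by
        linear_combination u1 - psiPd α β ε 0 1 * u0
      exact (mul_eq_zero.1 this).resolve_right hd
    refine ⟨ha, ?_⟩
    rw [ha] at u0
    linear_combination u0
  · intro f hf
    set D := phiPd α β ε 0 1 - psiPd α β ε 0 1 with hD
    refine ⟨(f 1 - f 0 * psiPd α β ε 0 1) / D, f 0 - (f 1 - f 0 * psiPd α β ε 0 1) / D, ?_⟩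
    set a := (f 1 - f 0 * psiPd α β ε 0 1) / D with ha
    have ha' : a * D = f 1 - f 0 * psiPd α β ε 0 1 := div_mul_cancel₀ _ hd
    rw [← sub_eq_zero]
    refine L_zero h _ ?_ ?_ ?_
    · change T _ = 0
      rw [map_sub, map_add, map_smul, map_smul, hT0', hf]
      change 0 - (a • T (phiPd α β ε 0) + _) = 0
      rw [show T (phiPd α β ε 0) = 0 from hT0]
      simp
    · simp only [Pi.sub_apply, Pi.add_apply, Pi.smul_apply, smul_eq_mul, a0, b0]; ring
    · simp only [Pi.sub_apply, Pi.add_apply, Pi.smul_apply, smul_eq_mul]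
      rw [hD] at ha'
      linear_combination -ha'
  · intro i hi
    exact L_phi h i (poch_a_ne hkα _ hi)
  · intro i hi
    have := L_phi (good_psi h) i (poch_a_ne hneg _ hi)
    rwa [lin_psi, ← psi_eq, ← psi_eq] at this

/-- sign flip -/
noncomputable def sgnS : Module.End ℂ (ℤ → ℂ) where
  toFun f n := (-1 : ℂ) ^ n * f n
  map_add' f g := by funext n; simp [mul_add]
  map_smul' c f := by funext n; simp; ring

theorem sgnS_apply (f : ℤ → ℂ) (n : ℤ) : sgnS f n = (-1 : ℂ) ^ n * f n := rfl

theorem sgnS_sgnS (f : ℤ → ℂ) : sgnS (sgnS f) = f := by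
  funext n
  rw [sgnS_apply, sgnS_apply, ← mul_assoc, ← mul_zpow]; simp

theorem L_sgn (α β ε : ℂ) (f : ℤ → ℂ) :
    (jacobiLin α β ε + 1 : Module.End ℂ (ℤ → ℂ)) (sgnS f)
      = -sgnS ((jacobiLin β α ε - 1 : Module.End ℂ (ℤ → ℂ)) f) := by
  funext n
  change jacobiL α β ε (sgnS f) n + sgnS f n = -((-1 : ℂ) ^ n * (jacobiL β α ε f n - f n))
  unfold jacobiL
  rw [sgnS_apply, sgnS_apply, sgnS_apply, zpow_add₀ (by norm_num), zpow_sub₀ (by norm_num), zpow_one,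
    show (n:ℂ) + ε + β + α = n + ε + α + β by ring,
    show 2 * (n:ℂ) + 2 * ε + β + α = 2 * n + 2 * ε + α + β by ring]
  ring

theorem phiM_eq (α β ε : ℂ) (i : ℕ) : phiMd α β ε i = (-1 : ℂ) ^ i • sgnS (phiPd β α ε i) := by
  funext n
  rw [Pi.smul_apply, sgnS_apply, smul_eq_mul]
  unfold phiMd phiPd
  rw [show (n:ℂ) + ε + β + α + 1 = n + ε + α + β + 1 by ring,
    show (-2 : ℂ) = -1 * 2 by norm_num, mul_pow, div_eq_mul_inv, div_eq_mul_inv _ ((-1:ℂ)^i * _ * _ * _)]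
  rw [mul_assoc ((-1:ℂ)^i), mul_assoc ((-1:ℂ)^i), mul_inv ((-1:ℂ)^i)]
  have : (-1:ℂ)^i * ((-1:ℂ)^i)⁻¹ = 1 := mul_inv_cancel₀ (pow_ne_zero _ (by norm_num))
  generalize (2 ^ i * (i.factorial : ℂ) * poch (β + 1) (i:ℤ))⁻¹ = X
  generalize ((-1:ℂ)^i)⁻¹ = Y at *
  generalize (-1:ℂ)^i = Z at *
  linear_combination (-((-1) ^ n * (poch (ε + β + 1) n / poch (ε + 1) n) *
      (poch (-(↑n + ε)) ↑i * poch (↑n + ε + α + β + 1) ↑i) * X)) * this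

theorem psiM_eq (α β ε : ℂ) (i : ℕ) : psiMd α β ε i = (-1 : ℂ) ^ i • sgnS (psiPd β α ε i) := by
  have := phiM_eq (-α) (-β) (ε + α + β) i
  rw [psi_eq, show ε + β + α = ε + α + β by ring, ← this]
  funext n
  unfold psiMd phiMd
  rw [show ε + α + β + -β + 1 = ε + α + 1 by ring,
    show (n:ℂ) + (ε + α + β) + -α + -β + 1 = n + ε + 1 by ring,
    show (n:ℂ) + (ε + α + β) = n + ε + α + β by ring]

end helpers

/-- Description of the kernels of `(L_{α,β;ε} - 1)^k` and
`(L_{α,β;ε} + 1)^l`, together with the linear independence of the spanning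
families and the resulting dimension count. -/
theorem stmt4 (α β ε : ℂ) (hgood : GoodParams α β ε) (k l : ℕ)
    (hk : 1 ≤ k) (hl : 1 ≤ l)
    (hkα : ∀ m : ℤ, α = (m : ℂ) → (k : ℤ) ≤ |m|)
    (hlβ : ∀ m : ℤ, β = (m : ℂ) → (l : ℤ) ≤ |m|) :
    LinearMap.ker ((jacobiLin α β ε - 1 : Module.End ℂ (ℤ → ℂ)) ^ k)
      = Submodule.span ℂ {g : ℤ → ℂ | ∃ i < k, g = phiPd α β ε i ∨ g = psiPd α β ε i} ∧
    LinearMap.ker ((jacobiLin α β ε + 1 : Module.End ℂ (ℤ → ℂ)) ^ l)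
      = Submodule.span ℂ {g : ℤ → ℂ | ∃ i < l, g = phiMd α β ε i ∨ g = psiMd α β ε i} ∧
    LinearIndependent ℂ (fun x : Fin k ⊕ Fin k =>
      Sum.elim (fun i : Fin k => phiPd α β ε i) (fun i : Fin k => psiPd α β ε i) x) ∧
    LinearIndependent ℂ (fun x : Fin l ⊕ Fin l =>
      Sum.elim (fun i : Fin l => phiMd α β ε i) (fun i : Fin l => psiMd α β ε i) x) ∧
    Module.finrank ℂ
      ↥(LinearMap.ker ((jacobiLin α β ε - 1 : Module.End ℂ (ℤ → ℂ)) ^ k)) = 2 * k ∧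
    Module.finrank ℂ
      ↥(LinearMap.ker ((jacobiLin α β ε + 1 : Module.End ℂ (ℤ → ℂ)) ^ l)) = 2 * l := by
  have hP := plus_data hgood k hk hkα
  have hM := plus_data (good_swap hgood) l hl hlβ
  obtain ⟨p1, p2, p3, p4, p5, p6⟩ := hP
  obtain ⟨m1, m2, m3, m4, m5, m6⟩ := hM
  obtain ⟨r1, r2, r3⟩ := abs_all _ (phiPd α β ε) (psiPd α β ε) p1 p2 p3 p4 k p5 p6
  have z1 : phiMd α β ε 0 = sgnS (phiPd β α ε 0) := by rw [phiM_eq]; simp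
  have z2 : psiMd α β ε 0 = sgnS (psiPd β α ε 0) := by rw [psiM_eq]; simp
  obtain ⟨s1, s2, s3⟩ := abs_all (jacobiLin α β ε + 1 : Module.End ℂ (ℤ → ℂ))
    (phiMd α β ε) (psiMd α β ε)
    (by rw [z1, L_sgn, m1]; simp) (by rw [z2, L_sgn, m2]; simp)
    (by
      intro a b hab
      rw [z1, z2] at hab
      have := congrArg sgnS hab
      rw [map_add, map_smul, map_smul, sgnS_sgnS, sgnS_sgnS, map_zero] at this
      exact m3 a b this)
    (by
      intro f hf
      rw [← sgnS_sgnS f, L_sgn, neg_eq_zero] at hf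
      have h2 := congrArg sgnS hf
      rw [sgnS_sgnS, map_zero] at h2
      obtain ⟨a, b, hab⟩ := m4 _ h2
      refine ⟨a, b, ?_⟩
      rw [z1, z2, ← map_smul, ← map_smul, ← map_add, ← hab, sgnS_sgnS])
    l
    (by
      intro i hi
      rw [phiM_eq, phiM_eq, map_smul, L_sgn, m5 i hi, pow_succ]
      simp)
    (by
      intro i hi
      rw [psiM_eq, psiM_eq, map_smul, L_sgn, m6 i hi, pow_succ]
      simp)
  exact ⟨r1, s1, r2, s2, r3, s3⟩
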